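/- arXiv:0704.3645 — 3 statements merged into one kernel-verified Lean document; each statement's English description precedes it below -/
import Mathlib

section
/- Let 1 ∈ A ⊆ B be an inclusion of unital C*-algebras, and let E : B → A be a faithful conditional expectation admitting a quasi-basis u_1, …, u_n such that Index(E) = Σ_{j=1}^n u_j u_j^* is invertible in B (this invertibility is automatic for index-finite type expectations). Then tsr(B) ≤ tsr(A) + n − 1; equivalently, for every integer t ≥ 1, if Lg_t(A) is dense in A^t, then Lg_{t+n−1}(B) is dense in B^{t+n−1}. -/
/-!
The expansion `b = ∑ j, E (b * u j) * star (u j)` says that `B` is generated as a left `A`-module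
by the `n` elements `v j = star (u j)`. A tuple in `B ^ (t + n - 1)` is therefore
`X *ᵥ v` for a `(t + n - 1) × n` matrix `X` over `A`. By a theorem of Rieffel, density of `Lg_t (A)`
implies that such an `X` can be approximated by left invertible matrices. If `Y * X = 1` and
`a ⬝ᵥ v = 1`, then `(a ᵥ* Y) ⬝ᵥ (X *ᵥ v) = 1`, so `X *ᵥ v` is left generating.

Rieffel's theorem is proved one column at a time: once the top part of the new column is left
invertible, row operations bring the matrix to block triangular form with a corner equal to `1`,
and only the remaining block has to be perturbed.
-/

open Matrix

/-- The set `Lg_ι (R)` of tuples generating `R` as a left ideal. -/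
def leftGeneratingTuples (ι R : Type*) [Fintype ι] [Semiring R] : Set (ι → R) :=
  {c | ∃ d : ι → R, d ⬝ᵥ c = 1}

/-- The set of rectangular matrices having a left inverse; its one-column case is
`leftGeneratingTuples`. -/
def leftInvertibleMatrices (m n R : Type*) [Fintype m] [DecidableEq n] [Semiring R] :
    Set (Matrix m n R) :=
  {X | ∃ Y : Matrix n m R, Y * X = 1}

section Semiring

variable {l m n m' n' R : Type*} [Fintype l] [Fintype m] [Fintype m']
  [DecidableEq n] [DecidableEq n'] [Semiring R]

theorem mul_mem_leftInvertibleMatrices [DecidableEq m] {X : Matrix l m R} {Y : Matrix m n R}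
    (hX : X ∈ leftInvertibleMatrices l m R) (hY : Y ∈ leftInvertibleMatrices m n R) :
    X * Y ∈ leftInvertibleMatrices l n R := by
  obtain ⟨X', hX'⟩ := hX
  obtain ⟨Y', hY'⟩ := hY
  exact ⟨Y' * X', by rw [Matrix.mul_assoc, ← Matrix.mul_assoc X', hX', Matrix.one_mul, hY']⟩

theorem reindex_mem_leftInvertibleMatrices (e : m ≃ m') (f : n ≃ n') {X : Matrix m n R}
    (hX : X ∈ leftInvertibleMatrices m n R) :
    reindex e f X ∈ leftInvertibleMatrices m' n' R := by
  obtain ⟨Y, hY⟩ := hX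
  exact ⟨reindex f e Y, by simp [hY]⟩

theorem fromRows_mem_leftInvertibleMatrices {X : Matrix m n R}
    (hX : X ∈ leftInvertibleMatrices m n R) (Z : Matrix l n R) :
    fromRows X Z ∈ leftInvertibleMatrices (m ⊕ l) n R := by
  obtain ⟨Y, hY⟩ := hX
  exact ⟨fromCols Y 0, by simp [fromCols_mul_fromRows, hY]⟩

theorem replicateCol_mem_leftInvertibleMatrices [Unique n] {c : m → R}
    (hc : c ∈ leftGeneratingTuples m R) :
    replicateCol n c ∈ leftInvertibleMatrices m n R := by
  obtain ⟨d, hd⟩ := hc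
  refine ⟨replicateRow n d, ?_⟩
  ext i j
  rw [replicateRow_mul_replicateCol_apply, hd, Subsingleton.elim i j, one_apply_eq]

theorem mulVec_mem_leftGeneratingTuples [Fintype n] {X : Matrix m n R} {v : n → R}
    (hX : X ∈ leftInvertibleMatrices m n R) (hv : v ∈ leftGeneratingTuples n R) :
    X *ᵥ v ∈ leftGeneratingTuples m R := by
  obtain ⟨Y, hY⟩ := hX
  obtain ⟨a, ha⟩ := hv
  exact ⟨a ᵥ* Y, by rw [dotProduct_mulVec, vecMul_vecMul, hY, vecMul_one, ha]⟩

theorem map_mem_leftInvertibleMatrices {S : Type*} [Semiring S] (f : R →+* S) {X : Matrix m n R}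
    (hX : X ∈ leftInvertibleMatrices m n R) : X.map f ∈ leftInvertibleMatrices m n S := by
  obtain ⟨Y, hY⟩ := hX
  exact ⟨Y.map f, by rw [← Matrix.map_mul, hY, Matrix.map_one f f.map_zero f.map_one]⟩

end Semiring

section Ring

variable {l m n R : Type*} [Fintype l] [Fintype m] [DecidableEq l] [Ring R]

theorem fromBlocks_zero_one_mem_leftInvertibleMatrices [Finite n] [DecidableEq n] {Z : Matrix m n R}
    (hZ : Z ∈ leftInvertibleMatrices m n R) (w : Matrix l n R) :
    fromBlocks Z 0 w 1 ∈ leftInvertibleMatrices (m ⊕ l) (n ⊕ l) R := by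
  cases nonempty_fintype n
  obtain ⟨Y, hY⟩ := hZ
  refine ⟨fromBlocks Y 0 (-(w * Y)) 1, ?_⟩
  simp [fromBlocks_multiply, Matrix.mul_assoc, hY]

-- The product of the elementary block matrices `[1 0; -p 1]` and `[1 c; 0 1]`.
theorem fromBlocks_one_neg_mem_leftInvertibleMatrices [DecidableEq m] {c : Matrix m l R}
    {p : Matrix l m R} {r : Matrix l l R} (hpc : p * c = 1 - r) :
    fromBlocks 1 c (-p) r ∈ leftInvertibleMatrices (m ⊕ l) (m ⊕ l) R := by
  refine ⟨fromBlocks (1 - c * p) (-c) p 1, ?_⟩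
  simp [fromBlocks_multiply, Matrix.sub_mul, Matrix.mul_assoc, hpc, Matrix.mul_sub]

theorem fromBlocks_eq_mul_fromBlocks_zero_one [DecidableEq m] {c : Matrix m l R}
    {p : Matrix l m R} {r : Matrix l l R} (hpc : p * c = 1 - r) (W : Matrix m n R)
    (w : Matrix l n R) :
    fromBlocks W c w r =
      fromBlocks 1 c (-p) r * fromBlocks (W - c * (w + p * W)) 0 (w + p * W) 1 := by
  have bottom_left : w = -p * (W - c * (w + p * W)) + r * (w + p * W) := by
    rw [Matrix.mul_sub, ← Matrix.mul_assoc, Matrix.neg_mul p c, hpc, Matrix.neg_mul, Matrix.neg_mul,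
      Matrix.sub_mul, Matrix.one_mul]
    abel
  rw [fromBlocks_multiply, ← bottom_left]
  simp

end Ring

section Density

variable {l m n m' n' R : Type*} [Fintype l] [Fintype m] [Fintype m']
  [DecidableEq n] [DecidableEq n'] [TopologicalSpace R]

theorem dense_leftInvertibleMatrices_reindex [Semiring R] (e : m ≃ m') (f : n ≃ n')
    (h : Dense (leftInvertibleMatrices m n R)) : Dense (leftInvertibleMatrices m' n' R) := by
  have hcont : Continuous (reindex e f : Matrix m n R → Matrix m' n' R) :=
    continuous_id.matrix_reindex e f
  refine ((reindex e f).surjective.denseRange.dense_image hcont h).mono ?_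
  rintro _ ⟨X, hX, rfl⟩
  exact reindex_mem_leftInvertibleMatrices e f hX

theorem dense_leftInvertibleMatrices_of_unique [Semiring R] [Unique n]
    (h : Dense (leftGeneratingTuples m R)) : Dense (leftInvertibleMatrices m n R) := by
  have hcont : Continuous (replicateCol n : (m → R) → Matrix m n R) :=
    continuous_id.matrix_replicateCol
  have hsurj : Function.Surjective (replicateCol n : (m → R) → Matrix m n R) := fun X =>
    ⟨fun i => X i default, by ext i j; simp [Subsingleton.elim j default]⟩
  refine (hsurj.denseRange.dense_image hcont h).mono ?_
  rintro _ ⟨c, hc, rfl⟩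
  exact replicateCol_mem_leftInvertibleMatrices hc

theorem dense_leftInvertibleMatrices_add_rows [Semiring R]
    (h : Dense (leftInvertibleMatrices m n R)) :
    Dense (leftInvertibleMatrices (m ⊕ l) n R) := by
  intro X
  have hcont : Continuous fun Z : Matrix m n R => fromRows Z X.toRows₂ := by
    refine continuous_matrix ?_
    rintro (i | i) j
    · exact continuous_id.matrix_elem i j
    · exact continuous_const
  simpa only [fromRows_toRows] using map_mem_closure hcont (h X.toRows₁) fun Z hZ =>
    fromRows_mem_leftInvertibleMatrices hZ X.toRows₂

variable [DecidableEq l] [Finite n] [Ring R] [IsTopologicalRing R]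

theorem fromBlocks_mem_closure_leftInvertibleMatrices
    (h : Dense (leftInvertibleMatrices m n R)) {c : Matrix m l R}
    (hc : c ∈ leftInvertibleMatrices m l R) (W : Matrix m n R) (w : Matrix l n R)
    (r : Matrix l l R) :
    fromBlocks W c w r ∈ closure (leftInvertibleMatrices (m ⊕ l) (n ⊕ l) R) := by
  classical
  obtain ⟨d, hd⟩ := hc
  have hpc : (1 - r) * d * c = 1 - r := by rw [Matrix.mul_assoc, hd, Matrix.mul_one]
  set p := (1 - r) * d
  have hcont : Continuous fun Z : Matrix m n R =>
      fromBlocks 1 c (-p) r * fromBlocks Z 0 (w + p * W) (1 : Matrix l l R) :=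
    continuous_const.matrix_mul <|
      continuous_id.matrix_fromBlocks continuous_const continuous_const continuous_const
  simpa only [← fromBlocks_eq_mul_fromBlocks_zero_one hpc] using
    map_mem_closure hcont (h (W - c * (w + p * W))) fun Z hZ =>
      mul_mem_leftInvertibleMatrices (fromBlocks_one_neg_mem_leftInvertibleMatrices hpc)
        (fromBlocks_zero_one_mem_leftInvertibleMatrices hZ (w + p * W))

theorem dense_leftInvertibleMatrices_sum (hn : Dense (leftInvertibleMatrices m n R))
    (hl : Dense (leftInvertibleMatrices m l R)) :
    Dense (leftInvertibleMatrices (m ⊕ l) (n ⊕ l) R) := by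
  intro X
  have hcont : Continuous fun c : Matrix m l R =>
      fromBlocks X.toBlocks₁₁ c X.toBlocks₂₁ X.toBlocks₂₂ :=
    continuous_const.matrix_fromBlocks continuous_id continuous_const continuous_const
  simpa only [fromBlocks_toBlocks, closure_closure] using
    map_mem_closure hcont (hl X.toBlocks₁₂) fun c hc =>
      fromBlocks_mem_closure_leftInvertibleMatrices hn hc X.toBlocks₁₁ X.toBlocks₂₁ X.toBlocks₂₂

theorem dense_leftInvertibleMatrices_fin {t : ℕ} (h : Dense (leftGeneratingTuples (Fin t) R))
    (k : ℕ) : Dense (leftInvertibleMatrices (Fin (t + k)) (Fin (k + 1)) R) := by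
  have column : Dense (leftInvertibleMatrices (Fin t) (Fin 1) R) :=
    dense_leftInvertibleMatrices_of_unique h
  induction k with
  | zero => exact column
  | succ k ih =>
    have tall_column : Dense (leftInvertibleMatrices (Fin (t + k)) (Fin 1) R) :=
      dense_leftInvertibleMatrices_reindex finSumFinEquiv (Equiv.refl _)
        (dense_leftInvertibleMatrices_add_rows column)
    exact dense_leftInvertibleMatrices_reindex (finSumFinEquiv (m := t + k)) finSumFinEquiv
      (dense_leftInvertibleMatrices_sum ih tall_column)

end Density

section Generators

variable {m n A B : Type*} [Fintype m] [Fintype n] [DecidableEq n] [Semiring A] [Semiring B]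
  [TopologicalSpace A] [TopologicalSpace B] [IsTopologicalSemiring B]

theorem dense_leftGeneratingTuples_of_surjective_dotProduct {f : A →+* B} (hf : Continuous f)
    {v : n → B} (hv : Function.Surjective fun a : n → A => (f ∘ a) ⬝ᵥ v)
    (h : Dense (leftInvertibleMatrices m n A)) : Dense (leftGeneratingTuples m B) := by
  have hcont : Continuous fun X : Matrix m n A => X.map f *ᵥ v :=
    (continuous_id.matrix_map hf).matrix_mulVec continuous_const
  have hsurj : Function.Surjective fun X : Matrix m n A => X.map f *ᵥ v := by
    intro b
    choose X hX using fun i => hv (b i)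
    exact ⟨X, funext hX⟩
  have v_mem : v ∈ leftGeneratingTuples n B :=
    let ⟨a, ha⟩ := hv 1
    ⟨f ∘ a, ha⟩
  refine (hsurj.denseRange.dense_image hcont h).mono ?_
  rintro _ ⟨X, hX, rfl⟩
  exact mulVec_mem_leftGeneratingTuples (map_mem_leftInvertibleMatrices f hX) v_mem

end Generators

theorem tsr_le_of_conditional_expectation_general {A B : Type*} [Ring A] [TopologicalSpace A]
    [IsTopologicalRing A] [Ring B] [TopologicalSpace B] [IsTopologicalRing B]
    {f : A →+* B} (hf : Continuous f) {n : ℕ} {v : Fin n → B}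
    (hv : Function.Surjective fun a : Fin n → A => (f ∘ a) ⬝ᵥ v) {t : ℕ}
    (htsrA : Dense (leftGeneratingTuples (Fin t) A)) :
    Dense (leftGeneratingTuples (Fin (t + n - 1)) B) := by
  cases n with
  | zero =>
    obtain ⟨a, ha⟩ := hv 1
    have : Subsingleton B := subsingleton_of_zero_eq_one (by simpa using ha)
    exact fun c => subset_closure ⟨0, Subsingleton.elim _ _⟩
  | succ k =>
    exact dense_leftGeneratingTuples_of_surjective_dotProduct hf hv
      (dense_leftInvertibleMatrices_fin htsrA k)

/-- If `1 ∈ A ⊆ B` is an inclusion of unital C*-algebras and `E : B → A` is a faithful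
conditional expectation with a quasi-basis of `n` elements whose index is invertible,
then `tsr (B) ≤ tsr (A) + n - 1`, expressed via density of the sets of left-generating
tuples: if `Lg_t (A)` is dense in `A^t` then `Lg_{t+n-1} (B)` is dense in `B^{t+n-1}`. -/
theorem tsr_le_of_conditional_expectation
    {B : Type*} [CStarAlgebra B] [PartialOrder B] [StarOrderedRing B]
    (A : StarSubalgebra ℂ B) (hA : IsClosed (A : Set B))
    (E : B →ₗ[ℂ] B)
    (hrange : ∀ x : B, E x ∈ A)
    (hid : ∀ x ∈ A, E x = x)
    (hbimod : ∀ a ∈ A, ∀ c ∈ A, ∀ x : B, E (a * x * c) = a * E x * c)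
    (hpos : ∀ x : B, 0 ≤ x → 0 ≤ E x)
    (hfaithful : ∀ x : B, E (star x * x) = 0 → x = 0)
    (n : ℕ) (u : Fin n → B)
    (hqb₁ : ∀ b : B, b = ∑ j, u j * E (star (u j) * b))
    (hqb₂ : ∀ b : B, b = ∑ j, E (b * u j) * star (u j))
    (hindex : IsUnit (∑ j, u j * star (u j)))
    (t : ℕ) (ht : 1 ≤ t)
    (htsrA : Dense {c : Fin t → A |
      ∃ d : Fin t → A, ∑ i, (d i : B) * (c i : B) = 1}) :
    Dense {c : Fin (t + n - 1) → B |
      ∃ d : Fin (t + n - 1) → B, ∑ i, d i * c i = 1} := by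
  refine tsr_le_of_conditional_expectation_general (f := (A.subtype : A →+* B))
    continuous_subtype_val (fun b => ⟨fun j => ⟨E (b * u j), hrange _⟩, (hqb₂ b).symm⟩) ?_
  simpa [leftGeneratingTuples, dotProduct, Subtype.ext_iff] using htsrA
end

section
/- Let 1 ∈ A ⊆ B be an inclusion of unital C*-algebras, and let E : B → A be a faithful conditional expectation admitting a quasi-basis u_1, …, u_n such that Index(E) = Σ_{j=1}^n u_j u_j^* is invertible in B. Then tsr(A) ≤ n·tsr(B) + n² − 2n + 1; equivalently, for every integer t ≥ 1, if Lg_t(B) is dense in B^t, then Lg_{nt+(n−1)²}(A) is dense in A^{nt+(n−1)²}. -/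
/-!
Write a tuple of `1 + m * n` elements of `A` as one element `a₀ ∈ A` together with `m` elements
`βᵢ = ∑ⱼ uⱼ aᵢⱼ` of `B`. A `(1 + m) × n` matrix `x` over `B` acts on `b ∈ B` by applying it to the
vector of coordinates `E (uⱼ* b)`, and a left inverse of `x` recovers `b` from the `1 + m` elements
of `B` so obtained. Some `x` gives `b ↦ a₀ E b + (b - E b)` in its first row and `b ↦ βᵢ E b` in the
others, hence sends `1` to `(a₀, β)`. Perturb this `x` to a left-invertible matrix, and perturb `1`
to some `z` with `E z = 1` for which the first entry of the image stays in `A`; applying `E` to the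
reconstruction of `z` shows that the perturbed tuple is left-generating over `A`. By Gaussian
elimination left-invertible `k × n` matrices over `B` are dense as soon as `k ≥ tsr B + n - 1`, and
`m = tsr B + n - 2` gives the stated bound.
-/

open Matrix Topology

section Algebra

/-- The set `Lg` of left-generating families, indexed by an arbitrary finite type: those generating
`R` as a left ideal. `tsr R ≤ k` means that `leftGenerating (Fin k) R` is dense. -/
def leftGenerating (ι R : Type*) [Fintype ι] [Semiring R] : Set (ι → R) :=
  {c | ∃ d : ι → R, d ⬝ᵥ c = 1}

/-- The set of rectangular matrices with a left inverse, the matrix version of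
`leftGenerating`. -/
def leftInvertible (m n R : Type*) [Fintype m] [DecidableEq n] [Semiring R] :
    Set (Matrix m n R) :=
  {x | ∃ y : Matrix n m R, y * x = 1}

variable {R ι ι' m m' n n' p q : Type*} [Fintype ι] [Fintype ι'] [Fintype m] [Fintype m']
  [DecidableEq n] [DecidableEq n'] [DecidableEq p] [DecidableEq q]

section Semiring

variable [Semiring R]

theorem comp_equiv_mem_leftGenerating {c : ι → R} (hc : c ∈ leftGenerating ι R) (e : ι' ≃ ι) :
    c ∘ e ∈ leftGenerating ι' R := by
  obtain ⟨d, hdc⟩ := hc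
  exact ⟨d ∘ e, by rw [comp_equiv_dotProduct_comp_equiv, hdc]⟩

theorem replicateCol_mem_leftInvertible [Subsingleton n] {c : ι → R}
    (hc : c ∈ leftGenerating ι R) : replicateCol n c ∈ leftInvertible ι n R := by
  obtain ⟨d, hdc⟩ := hc
  refine ⟨replicateRow n d, ?_⟩
  ext i j
  obtain rfl := Subsingleton.elim i j
  simpa [replicateRow_mul_replicateCol_apply] using hdc

theorem submatrix_equiv_mem_leftInvertible {x : Matrix m n R} (hx : x ∈ leftInvertible m n R)
    (e : m' ≃ m) (f : n' ≃ n) : x.submatrix e f ∈ leftInvertible m' n' R := by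
  obtain ⟨y, hyx⟩ := hx
  exact ⟨y.submatrix f e, by rw [submatrix_mul_equiv, hyx, submatrix_one_equiv]⟩

theorem fromRows_mem_leftInvertible {x : Matrix m n R} (hx : x ∈ leftInvertible m n R)
    (x' : Matrix m' n R) : fromRows x x' ∈ leftInvertible (m ⊕ m') n R := by
  obtain ⟨y, hyx⟩ := hx
  exact ⟨fromCols y 0, by rw [fromCols_mul_fromRows, hyx, Matrix.zero_mul, add_zero]⟩

theorem mul_mem_leftInvertible [Fintype n] {x : Matrix m n R} {x' : Matrix n p R}
    (hx : x ∈ leftInvertible m n R) (hx' : x' ∈ leftInvertible n p R) :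
    x * x' ∈ leftInvertible m p R := by
  obtain ⟨y, hyx⟩ := hx
  obtain ⟨y', hyx'⟩ := hx'
  refine ⟨y' * y, ?_⟩
  rw [Matrix.mul_assoc, ← Matrix.mul_assoc y, hyx, Matrix.one_mul, hyx']

theorem fromBlocks_one_zero_zero_mem_leftInvertible [Fintype p] {x : Matrix m q R}
    (hx : x ∈ leftInvertible m q R) :
    fromBlocks (1 : Matrix p p R) 0 0 x ∈ leftInvertible (p ⊕ m) (p ⊕ q) R := by
  obtain ⟨y, hyx⟩ := hx
  exact ⟨fromBlocks 1 0 0 y, by simp [fromBlocks_multiply, hyx]⟩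

end Semiring

section Ring

variable [Ring R] [Fintype p] [Fintype q]

theorem fromBlocks_upperUnitriangular_mem_leftInvertible (b : Matrix p q R) :
    fromBlocks 1 b 0 1 ∈ leftInvertible (p ⊕ q) (p ⊕ q) R :=
  ⟨fromBlocks 1 (-b) 0 1, by simp [fromBlocks_multiply]⟩

theorem fromBlocks_lowerUnitriangular_mem_leftInvertible (c : Matrix q p R) :
    fromBlocks 1 0 c 1 ∈ leftInvertible (p ⊕ q) (p ⊕ q) R :=
  ⟨fromBlocks 1 0 (-c) 1, by simp [fromBlocks_multiply]⟩

/-- Adding `w` times the lower block row to the upper one turns the corner `a` into `1`, which then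
clears its row and column. -/
theorem fromBlocks_eq_mul_of_add_mul_eq_one [DecidableEq m] {a : Matrix p p R} (b : Matrix p q R)
    {c : Matrix m p R} (x : Matrix m q R) {w : Matrix p m R} (hw : a + w * c = 1) :
    fromBlocks a b c x =
      fromBlocks (1 : Matrix p p R) (-w) 0 (1 : Matrix m m R) *
        fromBlocks (1 : Matrix p p R) 0 c (1 : Matrix m m R) *
        fromBlocks (1 : Matrix p p R) 0 0 (x - c * (b + w * x)) *
        fromBlocks (1 : Matrix p p R) (b + w * x) 0 (1 : Matrix q q R) := by
  obtain rfl : a = 1 - w * c := eq_sub_of_add_eq hw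
  simp only [fromBlocks_multiply, Matrix.mul_one, Matrix.one_mul, Matrix.mul_zero, add_zero,
    zero_add, Matrix.neg_mul, Matrix.mul_sub, Matrix.mul_add, Matrix.add_mul, Matrix.mul_assoc,
    fromBlocks_inj]
  exact ⟨by abel, by abel, trivial, by abel⟩

end Ring

end Algebra

section Density

variable {R ι ι' m m' n n' p q : Type*} [Fintype ι] [Fintype ι'] [Fintype m] [Fintype m']
  [DecidableEq n] [DecidableEq n'] [DecidableEq p] [DecidableEq q]

section Semiring

variable [Semiring R] [TopologicalSpace R]

theorem dense_leftGenerating_of_subsingleton [Subsingleton R] : Dense (leftGenerating ι R) :=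
  fun _ => subset_closure ⟨0, Subsingleton.elim _ _⟩

theorem dense_leftGenerating_of_equiv (h : Dense (leftGenerating ι R)) (e : ι' ≃ ι) :
    Dense (leftGenerating ι' R) :=
  e.injective.surjective_comp_right.denseRange.dense_of_mapsTo
    (by fun_prop) h fun _ hc => comp_equiv_mem_leftGenerating hc e

theorem dense_leftInvertible_of_equiv (h : Dense (leftInvertible m n R)) (e : m' ≃ m)
    (f : n' ≃ n) : Dense (leftInvertible m' n' R) :=
  (reindex e.symm f.symm).surjective.denseRange.dense_of_mapsTo
    (by fun_prop) h fun _ hx => submatrix_equiv_mem_leftInvertible hx e f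

theorem dense_leftInvertible_of_leftGenerating [Unique n] (h : Dense (leftGenerating ι R)) :
    Dense (leftInvertible ι n R) := by
  have hsurj : (replicateCol n : (ι → R) → Matrix ι n R).Surjective := fun x =>
    ⟨x.col default, by ext i j; simp [Subsingleton.elim j default]⟩
  exact hsurj.denseRange.dense_of_mapsTo (by fun_prop) h fun _ => replicateCol_mem_leftInvertible

theorem dense_leftInvertible_sum_left (h : Dense (leftInvertible m n R)) :
    Dense (leftInvertible (m ⊕ m') n R) := by
  intro x
  have hcont : Continuous fun y : Matrix m n R => fromRows y x.toRows₂ :=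
    continuous_pi (Sum.rec continuous_apply fun _ => continuous_const)
  simpa only [fromRows_toRows] using map_mem_closure hcont (h x.toRows₁) fun _ hy =>
    fromRows_mem_leftInvertible hy x.toRows₂

end Semiring

section Ring

variable [Ring R] [TopologicalSpace R] [IsTopologicalRing R]

theorem fromBlocks_mem_closure_leftInvertible [Fintype p] [Finite q]
    (h : Dense (leftInvertible m q R)) (a : Matrix p p R) (b : Matrix p q R)
    {c : Matrix m p R} (hc : c ∈ leftInvertible m p R) (x : Matrix m q R) :
    fromBlocks a b c x ∈ closure (leftInvertible (p ⊕ m) (p ⊕ q) R) := by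
  classical
  cases nonempty_fintype q
  obtain ⟨d, hdc⟩ := hc
  have hcorner : a + (1 - a) * d * c = 1 := by
    rw [Matrix.mul_assoc, hdc, Matrix.mul_one, add_sub_cancel]
  rw [fromBlocks_eq_mul_of_add_mul_eq_one b x hcorner]
  refine map_mem_closure (f := fun y => _ * fromBlocks 1 0 0 y * _) (by fun_prop) (h _)
    fun y hy => ?_
  have hleft := mul_mem_leftInvertible
    (fromBlocks_upperUnitriangular_mem_leftInvertible (-((1 - a) * d)))
    (fromBlocks_lowerUnitriangular_mem_leftInvertible c)
  exact mul_mem_leftInvertible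
    (mul_mem_leftInvertible hleft (fromBlocks_one_zero_zero_mem_leftInvertible hy))
    (fromBlocks_upperUnitriangular_mem_leftInvertible _)

theorem dense_leftInvertible_sum_sum [Fintype p] [Finite q]
    (hp : Dense (leftInvertible m p R)) (hq : Dense (leftInvertible m q R)) :
    Dense (leftInvertible (p ⊕ m) (p ⊕ q) R) := by
  intro x
  rw [← fromBlocks_toBlocks x, ← closure_closure]
  exact map_mem_closure (f := fun c => fromBlocks _ _ c _) (by fun_prop) (hp x.toBlocks₂₁)
    fun _ hc => fromBlocks_mem_closure_leftInvertible hq _ _ hc _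

theorem dense_leftInvertible_fin {t : ℕ} (h : Dense (leftGenerating (Fin t) R)) (n : ℕ) {k : ℕ}
    (hk : t + n ≤ k) : Dense (leftInvertible (Fin k) (Fin (n + 1)) R) := by
  have dense_column {k : ℕ} (hk : t ≤ k) : Dense (leftInvertible (Fin k) (Fin 1) R) := by
    obtain ⟨s, rfl⟩ := Nat.exists_eq_add_of_le hk
    exact dense_leftInvertible_of_equiv
      (dense_leftInvertible_sum_left (dense_leftInvertible_of_leftGenerating h))
      finSumFinEquiv.symm (.refl _)
  induction n generalizing k with
  | zero => exact dense_column hk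
  | succ n ih =>
    obtain ⟨k, rfl⟩ : ∃ k', k = 1 + k' := ⟨k - 1, by omega⟩
    exact dense_leftInvertible_of_equiv
      (dense_leftInvertible_sum_sum (dense_column (k := k) (by omega)) (ih (by omega)))
      finSumFinEquiv.symm ((finCongr (add_comm _ _)).trans finSumFinEquiv.symm)

end Ring

end Density

section Expectation

variable {𝕜 B : Type*} [NontriviallyNormedField 𝕜] [NormedRing B] [NormedAlgebra 𝕜 B]

/-- A bounded projection of the Banach algebra `B` onto a subalgebra `A` that is linear for the
right action of `A`: a conditional expectation without the order structure. The condition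
`E a = a` for `a ∈ A` is encoded as `E 1 = 1`. -/
structure IsRightExpectation (A : Subalgebra 𝕜 B) (E : B →L[𝕜] B) : Prop where
  mem : ∀ x, E x ∈ A
  map_one : E 1 = 1
  map_mul : ∀ x, ∀ a ∈ A, E (x * a) = E x * a

variable {ι κ : Type*} [Fintype ι] {A : Subalgebra 𝕜 B} {E : B →L[𝕜] B} {u v : ι → B}

/-- The coordinates `E (v j * b)` of `b` with respect to a quasi-basis; in the C*-algebra setting
`v j = star (u j)`. -/
noncomputable def quasiCoord (E : B →L[𝕜] B) (v : ι → B) : B →L[𝕜] (ι → B) :=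
  ContinuousLinearMap.pi fun j => E ∘L ContinuousLinearMap.mul 𝕜 B (v j)

/-- The half of the quasi-basis condition that reconstructs `b` from its coordinates by
multiplication on the left, for a pair of families `u`, `v` with `v` in the role of `star u`. -/
def IsLeftQuasiBasis (E : B →L[𝕜] B) (u v : ι → B) : Prop :=
  ∀ b, u ⬝ᵥ quasiCoord E v b = b

/-- The element `(c₀, (∑ j, u j * cᵢⱼ)ᵢ)` of `B ⊕ B^κ` with coordinates `c` over `A`. -/
def assemble (u : ι → B) (c : Unit ⊕ κ × ι → A) : Unit ⊕ κ → B :=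
  Sum.elim (fun _ => c (.inl ())) fun i => ∑ j, u j * c (.inr (i, j))

namespace IsRightExpectation

theorem apply_of_mem (hE : IsRightExpectation A E) {a : B} (ha : a ∈ A) : E a = a := by
  simpa [hE.map_one] using hE.map_mul 1 a ha

theorem apply_apply (hE : IsRightExpectation A E) (b : B) : E (E b) = E b :=
  hE.apply_of_mem (hE.mem b)

theorem mem_leftGenerating_of_apply_dotProduct_assemble [Fintype κ] (hE : IsRightExpectation A E)
    {w : Unit ⊕ κ → B} {c : Unit ⊕ κ × ι → A} (hw : E (w ⬝ᵥ assemble u c) = 1) :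
    c ∈ leftGenerating (Unit ⊕ κ × ι) A := by
  refine ⟨Sum.elim (fun _ => ⟨E (w (.inl ())), hE.mem _⟩)
    fun s => ⟨E (w (.inr s.1) * u s.2), hE.mem _⟩, Subtype.ext ?_⟩
  simpa [dotProduct, assemble, Fintype.sum_prod_type, Finset.mul_sum, ← mul_assoc,
    hE.map_mul] using hw

theorem apply_comp_dotProduct_quasiCoord (hE : IsRightExpectation A E)
    (huv : IsLeftQuasiBasis E u v) (b : B) : (E ∘ u) ⬝ᵥ quasiCoord E v b = E b := by
  conv_rhs => rw [← huv b]
  simp [dotProduct, quasiCoord, hE.map_mul _ _ (hE.mem _)]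

/-- The local section perturbs the given coordinates `c` by those of `p - assemble u c`: the
coordinates of an element of `B` over a quasi-basis are not unique. -/
theorem exists_continuous_section_assemble (hE : IsRightExpectation A E)
    (huv : IsLeftQuasiBasis E u v) (c : Unit ⊕ κ × ι → A) :
    ∃ s : (Unit ⊕ κ → B) → Unit ⊕ κ × ι → A, Continuous s ∧ s (assemble u c) = c ∧
      ∀ p, p (.inl ()) ∈ A → assemble u (s p) = p := by
  refine ⟨fun p => Sum.elim (fun _ => ⟨E (p (.inl ())), hE.mem _⟩) fun s =>
    c (.inr s) + ⟨quasiCoord E v (p (.inr s.1) - assemble u c (.inr s.1)) s.2, hE.mem _⟩,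
    ?_, ?_, fun p hp => ?_⟩
  · refine continuous_pi ?_
    rintro (_ | s)
    · exact Continuous.subtype_mk (by fun_prop) _
    · exact continuous_const.add (Continuous.subtype_mk (by fun_prop) _)
  · ext (_ | s)
    · simp [assemble, hE.apply_of_mem (c (.inl ())).2]
    · simp
  · ext (_ | i)
    · simp [assemble, hE.apply_of_mem hp]
    · have hreconstruct := huv (p (.inr i) - assemble u c (.inr i))
      simp only [dotProduct, assemble, Sum.elim_inr] at hreconstruct
      simp only [assemble, Sum.elim_inr, AddMemClass.coe_add, mul_add, Finset.sum_add_distrib,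
        hreconstruct, add_sub_cancel]

/-- At `x = x₀` the operator `b ↦ E b + (φ x b - E (φ x b))` is the identity, so nearby it is
invertible, and `z x` is its preimage of `1`. -/
theorem exists_continuousAt_normalization [CompleteSpace B] (hE : IsRightExpectation A E)
    {X : Type*} [TopologicalSpace X] {φ : X → B →L[𝕜] B} {x₀ : X} (hφ : ContinuousAt φ x₀)
    (hφ₀ : ∀ b, φ x₀ b - E (φ x₀ b) = b - E b) :
    ∃ z : X → B, ContinuousAt z x₀ ∧ z x₀ = 1 ∧
      ∀ᶠ x in 𝓝 x₀, E (z x) = 1 ∧ φ x (z x) ∈ A := by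
  let T : X → B →L[𝕜] B := fun x => E + (φ x - E ∘L φ x)
  have hT : ContinuousAt T x₀ :=
    continuousAt_const.add (hφ.sub (continuousAt_const.clm_comp hφ))
  have hT₀ : T x₀ = 1 := by
    ext b
    simp [T, hφ₀]
  have hinv : ContinuousAt (fun x => Ring.inverse (T x)) x₀ :=
    ContinuousAt.comp' (by simpa [hT₀] using NormedRing.inverse_continuousAt (1 : (B →L[𝕜] B)ˣ)) hT
  have hunit : ∀ᶠ x in 𝓝 x₀, IsUnit (T x) :=
    hT.eventually (Units.isOpen.mem_nhds (by simp [hT₀]))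
  refine ⟨fun x => Ring.inverse (T x) 1, hinv.clm_apply continuousAt_const, by simp [hT₀], ?_⟩
  filter_upwards [hunit] with x hx
  set z := Ring.inverse (T x) 1
  have hTz : E z + (φ x z - E (φ x z)) = 1 :=
    DFunLike.congr_fun (Ring.mul_inverse_cancel _ hx) 1
  have hEz : E z = 1 := by simpa [hE.apply_apply, hE.map_one] using congrArg E hTz
  have hφz : φ x z = E (φ x z) := by simpa [hEz, sub_eq_zero] using hTz
  exact ⟨hEz, hφz ▸ hE.mem _⟩

end IsRightExpectation

theorem IsLeftQuasiBasis.vecMul_dotProduct_mulVec_quasiCoord [DecidableEq ι] {m : Type*}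
    [Fintype m] (huv : IsLeftQuasiBasis E u v) {x : Matrix m ι B} {y : Matrix ι m B}
    (hyx : y * x = 1) (b : B) : u ᵥ* y ⬝ᵥ x *ᵥ quasiCoord E v b = b := by
  rw [← dotProduct_mulVec, mulVec_mulVec, hyx, one_mulVec, huv]

/-- The matrix acting through `quasiCoord` as `b ↦ p * E b + (b - E b, 0)`. -/
def pointMatrix (E : B →L[𝕜] B) (u : ι → B) (p : Unit ⊕ κ → B) : Matrix (Unit ⊕ κ) ι B :=
  vecMulVec p (E ∘ u) + fromRows (replicateRow Unit (u - E ∘ u)) 0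

theorem pointMatrix_mulVec_quasiCoord (hE : IsRightExpectation A E)
    (huv : IsLeftQuasiBasis E u v) (p : Unit ⊕ κ → B) (b : B) :
    pointMatrix E u p *ᵥ quasiCoord E v b =
      fun i => p i * E b + Sum.elim (fun _ => b - E b) 0 i := by
  ext (_ | i) <;>
  simp [pointMatrix, add_mulVec, vecMulVec_mulVec, fromRows_mulVec, replicateRow_mulVec_eq_const,
    sub_dotProduct, hE.apply_comp_dotProduct_quasiCoord huv, huv b]

theorem pointMatrix_mulVec_quasiCoord_one (hE : IsRightExpectation A E)
    (huv : IsLeftQuasiBasis E u v) (p : Unit ⊕ κ → B) :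
    pointMatrix E u p *ᵥ quasiCoord E v 1 = p := by
  rw [pointMatrix_mulVec_quasiCoord hE huv]
  ext (_ | i) <;> simp [hE.map_one]

theorem exists_continuous_clm_dotProduct {F : Type*} [SeminormedAddCommGroup F] [NormedSpace 𝕜 F]
    (f : F →L[𝕜] (ι → B)) :
    ∃ φ : (ι → B) → F →L[𝕜] B, Continuous φ ∧ ∀ r b, φ r b = r ⬝ᵥ f b :=
  ⟨fun r => ∑ j, ContinuousLinearMap.mul 𝕜 B (r j) ∘L ContinuousLinearMap.proj j ∘L f,
    by fun_prop, fun r b => by simp [dotProduct]⟩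

theorem exists_continuousAt_normalization_pointMatrix [CompleteSpace B]
    (hE : IsRightExpectation A E) (huv : IsLeftQuasiBasis E u v) {p : Unit ⊕ κ → B}
    (hp : p (.inl ()) ∈ A) :
    ∃ z : Matrix (Unit ⊕ κ) ι B → B, ContinuousAt z (pointMatrix E u p) ∧
      z (pointMatrix E u p) = 1 ∧ ∀ᶠ x in 𝓝 (pointMatrix E u p),
        E (z x) = 1 ∧ (x *ᵥ quasiCoord E v (z x)) (.inl ()) ∈ A := by
  obtain ⟨φ, hφ, hφ_apply⟩ := exists_continuous_clm_dotProduct (quasiCoord E v)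
  have hφ₀ (b : B) : φ (pointMatrix E u p (.inl ())) b = p (.inl ()) * E b + (b - E b) :=
    (hφ_apply _ b).trans (congrFun (pointMatrix_mulVec_quasiCoord hE huv p b) (.inl ()))
  have hpE (b : B) : E (p (.inl ()) * E b) = p (.inl ()) * E b :=
    hE.apply_of_mem (A.mul_mem hp (hE.mem b))
  obtain ⟨z, hz, hz₀, hzA⟩ := hE.exists_continuousAt_normalization
    (φ := fun x : Matrix (Unit ⊕ κ) ι B => φ (x (.inl ()))) (x₀ := pointMatrix E u p)
    (hφ.comp (continuous_apply _)).continuousAt (fun b => by simp [hφ₀, hpE, hE.apply_apply])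
  exact ⟨z, hz, hz₀, by simpa only [hφ_apply, mulVec] using hzA⟩

theorem dense_leftGenerating_of_dense_leftInvertible [CompleteSpace B] [DecidableEq ι] [Fintype κ]
    (hE : IsRightExpectation A E) (huv : IsLeftQuasiBasis E u v)
    (h : Dense (leftInvertible (Unit ⊕ κ) ι B)) :
    Dense (leftGenerating (Unit ⊕ κ × ι) A) := by
  intro c
  set x₀ := pointMatrix E u (assemble u c)
  obtain ⟨s, hs, hsc, hassemble⟩ := hE.exists_continuous_section_assemble huv c
  obtain ⟨z, hz, hz₀, hzA⟩ :=
    exists_continuousAt_normalization_pointMatrix hE huv (p := assemble u c) (c (.inl ())).2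
  have haction : Continuous fun q : Matrix (Unit ⊕ κ) ι B × B => q.1 *ᵥ quasiCoord E v q.2 := by
    fun_prop
  have hcont : ContinuousAt (fun x => s (x *ᵥ quasiCoord E v (z x))) x₀ :=
    (hs.comp haction).continuousAt.comp (continuousAt_id.prodMk hz)
  have hval : s (x₀ *ᵥ quasiCoord E v (z x₀)) = c := by
    rw [hz₀, pointMatrix_mulVec_quasiCoord_one hE huv, hsc]
  rw [← hval]
  refine mem_closure_of_frequently_of_tendsto ?_ hcont.tendsto
  refine ((mem_closure_iff_frequently.1 (h x₀)).and_eventually hzA).mono ?_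
  rintro x ⟨⟨y, hyx⟩, hEz, hzx⟩
  apply hE.mem_leftGenerating_of_apply_dotProduct_assemble (w := u ᵥ* y) (u := u)
  rw [hassemble _ hzx, huv.vecMul_dotProduct_mulVec_quasiCoord hyx, hEz]

end Expectation

theorem tsr_subalgebra_le_of_conditional_expectation_general {𝕜 B : Type*}
    [NontriviallyNormedField 𝕜] [NormedRing B] [NormedAlgebra 𝕜 B] [CompleteSpace B]
    {A : Subalgebra 𝕜 B} {E : B →L[𝕜] B} (hE : IsRightExpectation A E)
    {n : ℕ} {u v : Fin n → B} (huv : IsLeftQuasiBasis E u v)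
    {t : ℕ} (h : Dense (leftGenerating (Fin t) B)) :
    Dense (leftGenerating (Fin (n * t + (n - 1) ^ 2)) A) := by
  rcases subsingleton_or_nontrivial B with hB | hB
  · exact dense_leftGenerating_of_subsingleton
  obtain _ | n := n
  · simpa using huv 1
  obtain _ | t := t
  · obtain ⟨_, d, hd⟩ := h.nonempty
    simp at hd
  have hrows : Dense (leftInvertible (Unit ⊕ Fin (t + n)) (Fin (n + 1)) B) :=
    dense_leftInvertible_of_equiv (dense_leftInvertible_fin h n le_rfl)
      (Fintype.equivOfCardEq (by simp; ring)) (.refl _)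
  exact dense_leftGenerating_of_equiv (dense_leftGenerating_of_dense_leftInvertible hE huv hrows)
    (Fintype.equivOfCardEq (by simp; ring))

/-- If `1 ∈ A ⊆ B` is an inclusion of unital C*-algebras and `E : B → A` is a faithful
conditional expectation with a quasi-basis of `n` elements whose index is invertible,
then `tsr (A) ≤ n * tsr (B) + n ^ 2 - 2 * n + 1`, expressed via density of the sets of
left-generating tuples: if `Lg_t (B)` is dense in `B^t` then `Lg_{n*t+(n-1)^2} (A)` is
dense in `A^{n*t+(n-1)^2}`. -/
theorem tsr_subalgebra_le_of_conditional_expectation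
    {B : Type*} [CStarAlgebra B] [PartialOrder B] [StarOrderedRing B]
    (A : StarSubalgebra ℂ B) (hA : IsClosed (A : Set B))
    (E : B →ₗ[ℂ] B)
    (hrange : ∀ x : B, E x ∈ A)
    (hid : ∀ x ∈ A, E x = x)
    (hbimod : ∀ a ∈ A, ∀ c ∈ A, ∀ x : B, E (a * x * c) = a * E x * c)
    (hpos : ∀ x : B, 0 ≤ x → 0 ≤ E x)
    (hfaithful : ∀ x : B, E (star x * x) = 0 → x = 0)
    (n : ℕ) (u : Fin n → B)
    (hqb₁ : ∀ b : B, b = ∑ j, u j * E (star (u j) * b))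
    (hqb₂ : ∀ b : B, b = ∑ j, E (b * u j) * star (u j))
    (hindex : IsUnit (∑ j, u j * star (u j)))
    (t : ℕ) (ht : 1 ≤ t)
    (htsrB : Dense {c : Fin t → B | ∃ d : Fin t → B, ∑ i, d i * c i = 1}) :
    Dense {c : Fin (n * t + (n - 1) ^ 2) → A |
      ∃ d : Fin (n * t + (n - 1) ^ 2) → A, ∑ i, (d i : B) * (c i : B) = 1} := by
  have hEcont : Continuous E := map_continuous (PositiveLinearMap.mk₀ E hpos)
  have hE : IsRightExpectation A.toSubalgebra ⟨E, hEcont⟩ :=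
    ⟨hrange, hid 1 A.one_mem, fun x a ha => by simpa using hbimod 1 A.one_mem a ha x⟩
  have huv : IsLeftQuasiBasis ⟨E, hEcont⟩ u (star u) := fun b => (hqb₁ b).symm
  refine (tsr_subalgebra_le_of_conditional_expectation_general hE huv htsrB).mono ?_
  rintro c ⟨d, hdc⟩
  exact ⟨d, by simpa [dotProduct] using congrArg Subtype.val hdc⟩
end

section
/- (Warfield–Rieffel cancellation, C*-algebra form.) Let A be a C*-algebra, let p, q, r be projections in matrix algebras over A with r ∈ M_k(A), and let n ∈ ℕ. If p ⊕ r ∼ q ⊕ r, tsr(r M_k(A) r) ≤ n, and n*r ≾ p, then p ∼ q. -/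
open scoped Matrix

/-- Murray–von Neumann equivalence of projections in (possibly different-sized)
matrix algebras over a C*-algebra `A`. -/
def MvNEquiv {A : Type*} [NonUnitalCStarAlgebra A] {m n : Type*} [Fintype m] [Fintype n]
    (p : Matrix m m A) (q : Matrix n n A) : Prop :=
  ∃ v : Matrix m n A, v * vᴴ = p ∧ vᴴ * v = q

/-- `p` is a projection in a matrix algebra over `A`. -/
def IsProjM {A : Type*} [NonUnitalCStarAlgebra A] {m : Type*} [Fintype m]
    (p : Matrix m m A) : Prop :=
  pᴴ = p ∧ p * p = p

/-- `p ≾ q`: `p` is Murray–von Neumann equivalent to a subprojection `q₀` of `q`. -/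
def SubEquiv {A : Type*} [NonUnitalCStarAlgebra A] {m n : Type*} [Fintype m] [Fintype n]
    (p : Matrix m m A) (q : Matrix n n A) : Prop :=
  ∃ q₀ : Matrix n n A, IsProjM q₀ ∧ MvNEquiv p q₀ ∧ q₀ * q = q₀

/-- The block-diagonal direct sum `p ⊕ q` of two matrices over `A`. -/
def dSum {A : Type*} [NonUnitalCStarAlgebra A] {m n : Type*}
    (p : Matrix m m A) (q : Matrix n n A) : Matrix (m ⊕ n) (m ⊕ n) A :=
  Matrix.fromBlocks p 0 0 q

/-- `N * p`: the direct sum of `N` copies of `p`. -/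
def nFold {A : Type*} [NonUnitalCStarAlgebra A] {m : Type*} (N : ℕ)
    (p : Matrix m m A) : Matrix (m × Fin N) (m × Fin N) A :=
  Matrix.blockDiagonal fun _ : Fin N => p

/-- `tsr (r M r) ≤ N` for the corner of a matrix algebra over `A` by the projection `r`:
the `N`-tuples of elements of `r M r` generating `r M r` as a left ideal are dense. -/
def CornerTsrLe {A : Type*} [NonUnitalCStarAlgebra A] {m : Type*} [Fintype m]
    (r : Matrix m m A) (N : ℕ) : Prop :=
  Dense {c : Fin N → {x : Matrix m m A // r * x * r = x} |
    ∃ d : Fin N → {x : Matrix m m A // r * x * r = x},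
      ∑ i, (d i : Matrix m m A) * (c i : Matrix m m A) = r}

/-- A C*-algebra is simple if its only closed two-sided ideals are `0` and the
whole algebra. -/
def IsSimpleCStarAlgebra (A : Type*) [NonUnitalCStarAlgebra A] : Prop :=
  ∀ I : Set A, IsClosed I → (0 : A) ∈ I → (∀ x ∈ I, ∀ y ∈ I, x + y ∈ I) →
    (∀ x ∈ I, -x ∈ I) → (∀ x ∈ I, ∀ a : A, a * x ∈ I) → (∀ x ∈ I, ∀ a : A, x * a ∈ I) →
    I = {0} ∨ I = Set.univ

/-!
An orthogonal splitting `P = t tᴴ + s sᴴ` with `tᴴ t = p` and `sᴴ s = r` realises `p` as the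
complement in `P` of an embedded copy of `r`. The hypothesis `p ⊕ r ∼ q ⊕ r` provides two splittings
`P = t tᴴ + s sᴴ = t' t'ᴴ + s' s'ᴴ` of `P = p ⊕ r`, with `p` and `q` as the complements of the two
copies of `r`.

If two retractions `ρ`, `σ` onto `r` have a common section, the corresponding complements
`P - i ρ` and `P - j σ` are equivalent. Put `x = tᴴ s'` and `c = sᴴ s'`, so that `s' = t x + s c`.
Since `n * r ≾ p`, the stable rank condition lets us move `x` slightly to some `y` with a left
inverse `z`. Now `t y + s` is a common section of `sᴴ` and `z tᴴ`, while `t y + s c`, being close to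
`s'`, is up to an invertible element of the corner a common section of `z tᴴ` and `s'ᴴ`. Hence both
complements are equivalent to that of `t y`. This equivalence is only an algebraic one, and polar
decomposition makes it a Murray–von Neumann equivalence.
-/

open Filter Topology

section Algebraic

/-- Algebraic equivalence of idempotents in the sense of Kaplansky. It is stated for arbitrary
elements of a magma; idempotency enters only in `AlgebraicallyEquivalent.trans`. -/
def AlgebraicallyEquivalent {S : Type*} [Mul S] (e f : S) : Prop :=
  ∃ x y : S, x * y = e ∧ y * x = f

theorem AlgebraicallyEquivalent.trans {S : Type*} [Semigroup S] {e f g : S}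
    (he : IsIdempotentElem e) (hg : IsIdempotentElem g)
    (hef : AlgebraicallyEquivalent e f) (hfg : AlgebraicallyEquivalent f g) :
    AlgebraicallyEquivalent e g := by
  obtain ⟨x, y, rfl, hyx⟩ := hef
  obtain ⟨z, u, hzu, rfl⟩ := hfg
  refine ⟨x * z, u * y, ?_, ?_⟩
  · calc x * z * (u * y) = x * (z * u) * y := by simp only [mul_assoc]
      _ = x * y * (x * y) := by rw [hzu, ← hyx]; simp only [mul_assoc]
      _ = x * y := he
  · calc u * y * (x * z) = u * (y * x) * z := by simp only [mul_assoc]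
      _ = u * z * (u * z) := by rw [hyx, ← hzu]; simp only [mul_assoc]
      _ = u * z := hg

variable {R : Type*} [NonUnitalRing R]

theorem sub_mul_sub_of_mul_eq_left {P e f : R} (hP : IsIdempotentElem P) (heP : e * P = e)
    (hPf : P * f = f) (hef : e * f = e) : (P - e) * (P - f) = P - f := by
  rw [sub_mul, mul_sub, mul_sub, hP.eq, heP, hPf, hef, sub_self, sub_zero]

theorem sub_mul_sub_of_mul_eq_right {P e f : R} (hP : IsIdempotentElem P) (heP : e * P = e)
    (hPf : P * f = f) (hef : e * f = f) : (P - e) * (P - f) = P - e := by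
  rw [sub_mul, mul_sub, mul_sub, hP.eq, heP, hPf, hef]
  abel

theorem exists_corner_inverse_of_isQuasiregular {e w : R} (he : IsIdempotentElem e)
    (hew : e * w = w) (hwe : w * e = w) (h : IsQuasiregular (w - e)) :
    ∃ w', e * w' = w' ∧ w * w' = e ∧ w' * w = e := by
  obtain ⟨y, hright, hleft⟩ := isQuasiregular_iff.1 h
  have hy : y = (e - w) - (w - e) * y := by
    rw [← sub_eq_zero, ← hright]
    abel
  have hy' : y = (e - w) - y * (w - e) := by
    rw [← sub_eq_zero, ← hleft]
    abel
  have hey : e * y = y := by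
    rw [hy, mul_sub, mul_sub, ← mul_assoc, mul_sub, he.eq, hew]
  have hye : y * e = y := by
    rw [hy', sub_mul, sub_mul, mul_assoc, sub_mul, he.eq, hwe]
  refine ⟨e + y, by rw [mul_add, he.eq, hey], ?_, ?_⟩
  · calc w * (e + y) = y + (w - e) + (w - e) * y + e := by
          rw [mul_add, hwe, sub_mul, hey]
          abel
      _ = e := by rw [hright, zero_add]
  · calc (e + y) * w = w - e + y + y * (w - e) + e := by
          rw [add_mul, hew, mul_sub, hye]
          abel
      _ = e := by rw [hleft, zero_add]

/-- `j` and `σ` exhibit `r` as a retract of `P`, where matrices act on columns: `j` maps into the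
range of `P` and `σ` is a retraction of it onto `r`. The matrix `j` is not required to satisfy
`j * r = j`, because only `j * σ` matters. -/
structure IsRetract {m k : Type*} [Fintype m] [Fintype k] (P : Matrix m m R) (r : Matrix k k R)
    (j : Matrix m k R) (σ : Matrix k m R) : Prop where
  mul_inclusion : P * j = j
  retraction_mul : σ * P = σ
  mul_retraction : r * σ = σ
  retraction_mul_inclusion : σ * j = r

theorem IsRetract.algebraicallyEquivalent_sub_of_common_section {m k : Type*} [Fintype m]
    [Fintype k] {P : Matrix m m R} {r : Matrix k k R} {i j g : Matrix m k R} {ρ σ : Matrix k m R}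
    (hP : IsIdempotentElem P) (hi : IsRetract P r i ρ) (hj : IsRetract P r j σ) (hg : P * g = g)
    (hρg : ρ * g = r) (hσg : σ * g = r) :
    AlgebraicallyEquivalent (P - i * ρ) (P - j * σ) := by
  have hgρ : IsRetract P r g ρ := ⟨hg, hi.retraction_mul, hi.mul_retraction, hρg⟩
  have hgσ : IsRetract P r g σ := ⟨hg, hj.retraction_mul, hj.mul_retraction, hσg⟩
  have mul_P {f : Matrix m k R} {τ : Matrix k m R} (h : IsRetract P r f τ) :
      f * τ * P = f * τ := by
    rw [Matrix.mul_assoc, h.retraction_mul]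
  have P_mul {f : Matrix m k R} {τ : Matrix k m R} (h : IsRetract P r f τ) :
      P * (f * τ) = f * τ := by
    rw [← Matrix.mul_assoc, h.mul_inclusion]
  have mul_mul {f f' : Matrix m k R} {τ τ' : Matrix k m R} (hτ : τ * f' = r)
      (hrτ' : r * τ' = τ') : f * τ * (f' * τ') = f * τ' := by
    rw [Matrix.mul_assoc, ← Matrix.mul_assoc τ, hτ, hrτ']
  have same_retraction {f f' : Matrix m k R} {τ : Matrix k m R} (h : IsRetract P r f τ)
      (h' : IsRetract P r f' τ) : (P - f * τ) * (P - f' * τ) = P - f' * τ :=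
    sub_mul_sub_of_mul_eq_left hP (mul_P h) (P_mul h')
      (mul_mul h'.retraction_mul_inclusion h.mul_retraction)
  have same_section {τ τ' : Matrix k m R} (h : IsRetract P r g τ) (h' : IsRetract P r g τ') :
      (P - g * τ) * (P - g * τ') = P - g * τ :=
    sub_mul_sub_of_mul_eq_right hP (mul_P h) (P_mul h')
      (mul_mul h.retraction_mul_inclusion h'.mul_retraction)
  refine ⟨(P - g * ρ) * (P - j * σ), (P - g * σ) * (P - i * ρ), ?_, ?_⟩
  · rw [mul_assoc, ← mul_assoc (P - j * σ), same_retraction hj hgσ, ← mul_assoc,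
      same_section hgρ hgσ, same_retraction hgρ hi]
  · rw [mul_assoc, ← mul_assoc (P - i * ρ), same_retraction hi hgρ, ← mul_assoc,
      same_section hgσ hgρ, same_retraction hgσ hj]

end Algebraic

section BlockColumn

variable {R l m o m' : Type*}

/-- The matrix with the blocks `f i` stacked on top of each other, as an equivalence. Rows are
indexed by `m × o` to match `Matrix.blockDiagonal`. -/
def blockColumn : (o → Matrix m l R) ≃ Matrix (m × o) l R where
  toFun f := Matrix.of fun i j => f i.2 i.1 j
  invFun M i := Matrix.of fun a j => M (a, i) j
  left_inv _ := rfl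
  right_inv _ := rfl

/-- The matrix with the blocks `f i` placed side by side, indexed as in `blockColumn`. -/
def blockRow (f : o → Matrix l m R) : Matrix l (m × o) R :=
  Matrix.of fun i j => f j.2 i j.1

@[simp]
theorem blockColumn_apply (f : o → Matrix m l R) (i : m × o) (j : l) :
    blockColumn f i j = f i.2 i.1 j :=
  rfl

@[simp]
theorem blockRow_apply (f : o → Matrix l m R) (i : l) (j : m × o) :
    blockRow f i j = f j.2 i j.1 :=
  rfl

theorem continuous_blockColumn [TopologicalSpace R] :
    Continuous (blockColumn : (o → Matrix m l R) → Matrix (m × o) l R) :=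
  continuous_matrix fun i j =>
    Continuous.matrix_elem (A := fun f : o → Matrix m l R => f i.2) (continuous_apply i.2) i.1 j

variable [NonUnitalSemiring R]

theorem blockRow_mul_blockColumn [Fintype m] [Fintype o] (d : o → Matrix m' m R)
    (f : o → Matrix m l R) : blockRow d * blockColumn f = ∑ i, d i * f i := by
  ext i j
  simp [Matrix.mul_apply, Matrix.sum_apply, Fintype.sum_prod_type_right]

theorem blockDiagonal_mul_blockColumn [Fintype m] [Fintype o] [DecidableEq o]
    (D : o → Matrix m' m R) (f : o → Matrix m l R) :
    Matrix.blockDiagonal D * blockColumn f = blockColumn fun i => D i * f i := by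
  ext i j
  simp [Matrix.mul_apply, Matrix.blockDiagonal_apply, Fintype.sum_prod_type]

theorem blockColumn_mul [Fintype l] (f : o → Matrix m l R) (r : Matrix l m' R) :
    blockColumn f * r = blockColumn fun i => f i * r :=
  rfl

end BlockColumn

section CStarAlgebra

theorem isQuasiregular_of_norm_lt_one (𝕜 : Type*) {B : Type*} [NontriviallyNormedField 𝕜]
    [CompleteSpace 𝕜] [NonUnitalNormedRing B] [CompleteSpace B] [NormedSpace 𝕜 B]
    [IsScalarTower 𝕜 B B] [SMulCommClass 𝕜 B B] [RegularNormedAlgebra 𝕜 B] {x : B}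
    (hx : ‖x‖ < 1) : IsQuasiregular x := by
  rw [isQuasiregular_iff_isUnit' 𝕜, ← sub_neg_eq_add]
  exact isUnit_one_sub_of_norm_lt_one (by rwa [norm_neg, Unitization.norm_inr])

theorem AlgebraicallyEquivalent.exists_partialIsometry {B : Type*} [NonUnitalCStarAlgebra B]
    {p q : B} (hp : IsStarProjection p) (hq : IsStarProjection q)
    (h : AlgebraicallyEquivalent p q) : ∃ w : B, w * star w = p ∧ star w * w = q := by
  let _ := CStarAlgebra.spectralOrder B
  have := CStarAlgebra.spectralOrderedRing B
  obtain ⟨x₀, y, hx₀y, hyx₀⟩ := h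
  obtain ⟨x, hx⟩ : ∃ x, x = x₀ * q := ⟨_, rfl⟩
  have hxy : x * y = p := by
    rw [hx, ← hyx₀, ← mul_assoc, mul_assoc, hx₀y, hp.isIdempotentElem.eq]
  have hyx : y * x = q := by
    rw [hx, ← mul_assoc, hyx₀, hq.isIdempotentElem.eq]
  have hxq : x * q = x := by rw [hx, mul_assoc, hq.isIdempotentElem.eq]
  have hinv : x * star x * (star y * y) = p := by
    calc x * star x * (star y * y) = x * star (y * x) * y := by simp only [star_mul, mul_assoc]
      _ = p := by rw [hyx, hq.isSelfAdjoint.star_eq, hxq, hxy]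
  have hinv' : star y * y * (x * star x) = p := by
    rw [← hp.isSelfAdjoint.star_eq, ← hinv]
    simp only [star_mul, star_star, mul_assoc]
  -- `|y|` commutes with `x x*`, since `y* y` and `x x*` are mutually inverse in the corner of `p`.
  set a := CFC.sqrt (star y * y)
  have haa : a * a = star y * y := CFC.sqrt_mul_sqrt_self _ (star_mul_self_nonneg y)
  have hastar : star a = a := (CFC.sqrt_nonneg _).isSelfAdjoint.star_eq
  have hcomm : Commute a (x * star x) :=
    Commute.cfcₙ_nnreal (show Commute _ _ from hinv'.trans hinv.symm) _
  refine ⟨a * x, ?_, ?_⟩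
  · calc a * x * star (a * x) = a * (x * star x * a) := by
          rw [star_mul, hastar]
          simp only [mul_assoc]
      _ = p := by rw [← hcomm.eq, ← mul_assoc, haa, hinv']
  · calc star (a * x) * (a * x) = star x * (a * a) * x := by
          rw [star_mul, hastar]
          simp only [mul_assoc]
      _ = star (y * x) * (y * x) := by
          rw [haa, star_mul]
          simp only [mul_assoc]
      _ = q := by rw [hyx, hq.isSelfAdjoint.star_eq, hq.isIdempotentElem.eq]

end CStarAlgebra

section Matrix

variable {A : Type*} [NonUnitalCStarAlgebra A] {k l m : Type*} [Fintype k] [Fintype l] [Fintype m]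

theorem eventually_isQuasiregular_nhds_zero :
    ∀ᶠ x in 𝓝 (0 : Matrix m m A), IsQuasiregular x := by
  let _ := CStarAlgebra.spectralOrder A
  have := CStarAlgebra.spectralOrderedRing A
  -- `CStarMatrix` carries, definitionally, the same topology as `Matrix`.
  have hball : ∀ᶠ x in 𝓝 (0 : CStarMatrix m m A), ‖x‖ < 1 :=
    continuous_norm.tendsto' 0 0 norm_zero |>.eventually_lt_const one_pos
  exact hball.mono fun x hx => isQuasiregular_of_norm_lt_one ℂ hx

theorem eq_zero_of_conjTranspose_mul_self_eq_zero {c : Type*} {v : Matrix m c A}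
    (h : vᴴ * v = 0) : v = 0 := by
  let _ := CStarAlgebra.spectralOrder A
  have := CStarAlgebra.spectralOrderedRing A
  ext i j
  have hsum : ∑ i, star (v i j) * v i j = 0 := congrFun₂ h j j
  have hterm : star (v i j) * v i j = 0 :=
    (Finset.sum_eq_zero_iff_of_nonneg fun i _ => star_mul_self_nonneg (v i j)).1 hsum i
      (Finset.mem_univ i)
  exact (CStarRing.star_mul_self_eq_zero_iff _).1 hterm

theorem mul_conjTranspose_mul_self_of_isIdempotentElem {v : Matrix m l A}
    (h : IsIdempotentElem (vᴴ * v)) : v * (vᴴ * v) = v := by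
  rw [← sub_eq_zero]
  apply eq_zero_of_conjTranspose_mul_self_eq_zero
  have hself : (vᴴ * v)ᴴ = vᴴ * v := by simp
  calc (v * (vᴴ * v) - v)ᴴ * (v * (vᴴ * v) - v)
      = vᴴ * v * (vᴴ * v) * (vᴴ * v) - vᴴ * v * (vᴴ * v) - (vᴴ * v * (vᴴ * v) - vᴴ * v) := by
        rw [Matrix.conjTranspose_sub, Matrix.conjTranspose_mul, hself]
        simp only [Matrix.sub_mul, Matrix.mul_sub, Matrix.mul_assoc]
    _ = 0 := by rw [h.eq, h.eq, sub_self]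

theorem IsProjM.dSum {p : Matrix m m A} {q : Matrix l l A} (hp : IsProjM p) (hq : IsProjM q) :
    IsProjM (dSum p q) := by
  constructor
  · simp [_root_.dSum, Matrix.fromBlocks_conjTranspose, hp.1, hq.1]
  · simp [_root_.dSum, Matrix.fromBlocks_multiply, hp.2, hq.2]

theorem IsProjM.mvNEquiv_refl {p : Matrix m m A} (hp : IsProjM p) : MvNEquiv p p :=
  ⟨p, by rw [hp.1, hp.2], by rw [hp.1, hp.2]⟩

theorem MvNEquiv.symm {p : Matrix m m A} {q : Matrix l l A} (h : MvNEquiv p q) : MvNEquiv q p := by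
  obtain ⟨v, hp, hq⟩ := h
  exact ⟨vᴴ, by rwa [Matrix.conjTranspose_conjTranspose],
    by rwa [Matrix.conjTranspose_conjTranspose]⟩

theorem MvNEquiv.trans {p : Matrix m m A} {q : Matrix l l A} {s : Matrix k k A}
    (hp : IsIdempotentElem p) (hs : IsIdempotentElem s) (hpq : MvNEquiv p q)
    (hqs : MvNEquiv q s) : MvNEquiv p s := by
  obtain ⟨v, rfl, hvq⟩ := hpq
  obtain ⟨u, huq, rfl⟩ := hqs
  refine ⟨v * u, ?_, ?_⟩
  · calc v * u * (v * u)ᴴ = v * (u * uᴴ) * vᴴ := by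
          simp only [Matrix.conjTranspose_mul, Matrix.mul_assoc]
      _ = v * vᴴ * (v * vᴴ) := by rw [huq, ← hvq]; simp only [Matrix.mul_assoc]
      _ = v * vᴴ := hp
  · calc (v * u)ᴴ * (v * u) = uᴴ * (vᴴ * v) * u := by
          simp only [Matrix.conjTranspose_mul, Matrix.mul_assoc]
      _ = uᴴ * u * (uᴴ * u) := by rw [hvq, ← huq]; simp only [Matrix.mul_assoc]
      _ = uᴴ * u := hs

theorem MvNEquiv.of_algebraicallyEquivalent {p q : Matrix m m A} (hp : IsProjM p)
    (hq : IsProjM q) (h : AlgebraicallyEquivalent p q) : MvNEquiv p q := by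
  let _ := CStarAlgebra.spectralOrder A
  have := CStarAlgebra.spectralOrderedRing A
  exact AlgebraicallyEquivalent.exists_partialIsometry (B := CStarMatrix m m A)
    ⟨hp.2, hp.1⟩ ⟨hq.2, hq.1⟩ h

theorem SubEquiv.exists_coisometry {e : Matrix l l A} {p : Matrix m m A} (h : SubEquiv e p) :
    ∃ v : Matrix l m A, v * vᴴ = e ∧ e * v = v ∧ v * p = v := by
  obtain ⟨_, ⟨-, hidem⟩, ⟨v, rfl, rfl⟩, hsub⟩ := h
  have hv : v * (vᴴ * v) = v := mul_conjTranspose_mul_self_of_isIdempotentElem hidem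
  refine ⟨v, rfl, by rw [Matrix.mul_assoc, hv], ?_⟩
  calc v * p = v * (vᴴ * v * p) := by rw [← Matrix.mul_assoc, hv]
    _ = v := by rw [hsub, hv]

end Matrix

section StableRank

variable {A : Type*} [NonUnitalCStarAlgebra A] {a k : Type*} [Fintype a] [Fintype k] {n : ℕ}

theorem nFold_mul_blockColumn_mul (r : Matrix k k A) (f : Fin n → Matrix k k A) :
    nFold n r * blockColumn f * r = blockColumn fun i => r * f i * r := by
  rw [nFold, blockDiagonal_mul_blockColumn, blockColumn_mul]

theorem CornerTsrLe.mem_closure_left_invertible {p : Matrix a a A} {r : Matrix k k A}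
    (hp : pᴴ = p) (hr : IsIdempotentElem r) (htsr : CornerTsrLe r n)
    (hsub : SubEquiv (nFold n r) p) {x : Matrix a k A} (hpx : p * x = x) (hxr : x * r = x) :
    x ∈ closure {y : Matrix a k A | p * y = y ∧ y * r = y ∧ ∃ z : Matrix k a A, z * y = r} := by
  obtain ⟨v, hv, hev, hvp⟩ := hsub.exists_coisometry
  have hpv : p * vᴴ = vᴴ := by rw [← hp, ← Matrix.conjTranspose_mul, hvp]
  -- Only the component `v * x` of `x`, a tuple of elements of the corner, is perturbed.
  let F (f : Fin n → {c : Matrix k k A // r * c * r = c}) : Matrix a k A :=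
    x - vᴴ * (v * x) + vᴴ * blockColumn fun i => (f i : Matrix k k A)
  have hF : Continuous F := continuous_const.add <| continuous_const.matrix_mul <|
    continuous_blockColumn.comp <| by fun_prop
  have hcorner (i : Fin n) : r * blockColumn.symm (v * x) i * r = blockColumn.symm (v * x) i := by
    have h : nFold n r * (v * x) * r = v * x := by
      rw [← Matrix.mul_assoc, hev, Matrix.mul_assoc, hxr]
    rw [← blockColumn.apply_symm_apply (v * x), nFold_mul_blockColumn_mul] at h
    exact congrFun (blockColumn.injective h) i
  have hFx : F (fun i => ⟨_, hcorner i⟩) = x := by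
    simp only [F, Equiv.apply_symm_apply, sub_add_cancel]
  rw [← hFx]
  refine map_mem_closure hF (htsr _) fun f ⟨d, hd⟩ => ?_
  set C := blockColumn fun i => (f i : Matrix k k A)
  have hC : nFold n r * C * r = C := by
    rw [nFold_mul_blockColumn_mul]
    simp only [(f _).2, C]
  have hCr : C * r = C := by
    rw [← hC, Matrix.mul_assoc _ r, hr.eq]
  have heC : nFold n r * C = C := by
    rwa [Matrix.mul_assoc, hCr] at hC
  have hvF : v * F f = C := by
    rw [Matrix.mul_add, Matrix.mul_sub, ← Matrix.mul_assoc v, ← Matrix.mul_assoc v, hv,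
      ← Matrix.mul_assoc, hev, sub_self, zero_add, heC]
  refine ⟨?_, ?_, blockRow (fun i => (d i : Matrix k k A)) * v, ?_⟩
  · simp only [F, Matrix.mul_add, Matrix.mul_sub, ← Matrix.mul_assoc, hpx, hpv]
  · simp only [F, Matrix.add_mul, Matrix.sub_mul, Matrix.mul_assoc, hxr, C, hCr]
  · rw [Matrix.mul_assoc, hvF, blockRow_mul_blockColumn, hd]

end StableRank

section OrthogonalSplitting

variable {A : Type*} [NonUnitalCStarAlgebra A] {a b k m : Type*} [Fintype a] [Fintype b]
  [Fintype k] [Fintype m] {P : Matrix m m A} {p : Matrix a a A} {q : Matrix b b A}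
  {r : Matrix k k A}

/-- `P` is the orthogonal sum of the copies `t * tᴴ` of the projection `p` and `s * sᴴ` of the
projection `r`. -/
structure IsOrthogonalSplitting (P : Matrix m m A) (p : Matrix a a A) (r : Matrix k k A)
    (t : Matrix m a A) (s : Matrix m k A) : Prop where
  isProjM_left : IsProjM p
  isProjM_right : IsProjM r
  add_eq : t * tᴴ + s * sᴴ = P
  left_isometry : tᴴ * t = p
  right_isometry : sᴴ * s = r
  orthogonal : tᴴ * s = 0

theorem MvNEquiv.exists_isOrthogonalSplitting (hp : IsProjM p) (hr : IsProjM r)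
    (h : MvNEquiv P (dSum p r)) : ∃ t s, IsOrthogonalSplitting P p r t s := by
  obtain ⟨v, rfl, hv⟩ := h
  have hblock (i j : a ⊕ k) : ∑ x, star (v x i) * v x j = dSum p r i j := congrFun₂ hv i j
  refine ⟨v.toCols₁, v.toCols₂, hp, hr, ?_, ?_, ?_, ?_⟩ <;> ext i j
  · simp [Matrix.mul_apply, Fintype.sum_sum_type]
  · simpa [Matrix.mul_apply, dSum] using hblock (.inl i) (.inl j)
  · simpa [Matrix.mul_apply, dSum] using hblock (.inr i) (.inr j)
  · simpa [Matrix.mul_apply, dSum] using hblock (.inl i) (.inr j)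

namespace IsOrthogonalSplitting

variable {t : Matrix m a A} {s : Matrix m k A}

theorem swap (h : IsOrthogonalSplitting P p r t s) : IsOrthogonalSplitting P r p s t where
  isProjM_left := h.isProjM_right
  isProjM_right := h.isProjM_left
  add_eq := by rw [add_comm, h.add_eq]
  left_isometry := h.right_isometry
  right_isometry := h.left_isometry
  orthogonal := by
    rw [← Matrix.conjTranspose_conjTranspose t, ← Matrix.conjTranspose_mul, h.orthogonal,
      Matrix.conjTranspose_zero]

theorem conjTranspose_eq (h : IsOrthogonalSplitting P p r t s) : Pᴴ = P := by
  rw [← h.add_eq]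
  simp

theorem right_mul (h : IsOrthogonalSplitting P p r t s) : s * r = s := by
  have hidem : IsIdempotentElem (sᴴ * s) := by
    rw [h.right_isometry]
    exact h.isProjM_right.2
  simpa only [h.right_isometry] using mul_conjTranspose_mul_self_of_isIdempotentElem hidem

theorem mul_conjTranspose_right (h : IsOrthogonalSplitting P p r t s) : r * sᴴ = sᴴ := by
  rw [← h.isProjM_right.1, ← Matrix.conjTranspose_mul, h.right_mul]

theorem mul_right (h : IsOrthogonalSplitting P p r t s) : P * s = s := by
  rw [← h.add_eq, Matrix.add_mul, Matrix.mul_assoc, h.orthogonal, Matrix.mul_zero, zero_add,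
    Matrix.mul_assoc, h.right_isometry, h.right_mul]

theorem conjTranspose_right_mul (h : IsOrthogonalSplitting P p r t s) : sᴴ * P = sᴴ := by
  rw [← h.conjTranspose_eq, ← Matrix.conjTranspose_mul, h.mul_right]

theorem isIdempotentElem (h : IsOrthogonalSplitting P p r t s) : IsIdempotentElem P := by
  calc P * P = P * (t * tᴴ + s * sᴴ) := by rw [h.add_eq]
    _ = P := by
      rw [Matrix.mul_add, ← Matrix.mul_assoc, h.swap.mul_right, ← Matrix.mul_assoc, h.mul_right,
        h.add_eq]

theorem sub_right (h : IsOrthogonalSplitting P p r t s) : P - s * sᴴ = t * tᴴ := by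
  rw [← h.add_eq, add_sub_cancel_right]

theorem isProjM_mul_conjTranspose_left (h : IsOrthogonalSplitting P p r t s) :
    IsProjM (t * tᴴ) := by
  refine ⟨by simp, ?_⟩
  rw [Matrix.mul_assoc, ← Matrix.mul_assoc tᴴ, h.left_isometry, h.swap.mul_conjTranspose_right]

theorem isRetract (h : IsOrthogonalSplitting P p r t s) : IsRetract P r s sᴴ :=
  ⟨h.mul_right, h.conjTranspose_right_mul, h.mul_conjTranspose_right, h.right_isometry⟩

theorem isRetract_of_left_inverse (h : IsOrthogonalSplitting P p r t s) {y : Matrix a k A}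
    {z : Matrix k a A} (hpy : p * y = y) (hzy : z * y = r) :
    IsRetract P r (t * y) (r * z * tᴴ) where
  mul_inclusion := by rw [← Matrix.mul_assoc, h.swap.mul_right]
  retraction_mul := by rw [Matrix.mul_assoc, h.swap.conjTranspose_right_mul]
  mul_retraction := by simp only [← Matrix.mul_assoc, h.isProjM_right.2]
  retraction_mul_inclusion := by
    rw [Matrix.mul_assoc, ← Matrix.mul_assoc tᴴ, h.left_isometry, hpy, Matrix.mul_assoc, hzy,
      h.isProjM_right.2]

theorem algebraicallyEquivalent_sub_of_orthogonal (h : IsOrthogonalSplitting P p r t s)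
    {j : Matrix m k A} {σ : Matrix k m A} (hj : IsRetract P r j σ) (hsj : sᴴ * j = 0)
    (hσs : σ * s = 0) : AlgebraicallyEquivalent (P - s * sᴴ) (P - j * σ) := by
  refine h.isRetract.algebraicallyEquivalent_sub_of_common_section h.isIdempotentElem hj
    (g := j + s) ?_ ?_ ?_
  · rw [Matrix.mul_add, hj.mul_inclusion, h.mul_right]
  · rw [Matrix.mul_add, hsj, h.right_isometry, zero_add]
  · rw [Matrix.mul_add, hj.retraction_mul_inclusion, hσs, add_zero]

theorem algebraicallyEquivalent_sub_of_isQuasiregular (h : IsOrthogonalSplitting P p r t s)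
    {j g : Matrix m k A} {σ : Matrix k m A} (hj : IsRetract P r j σ) (hPg : P * g = g)
    (hgr : g * r = g) (hσg : σ * g = r) (hreg : IsQuasiregular (sᴴ * g - r)) :
    AlgebraicallyEquivalent (P - j * σ) (P - s * sᴴ) := by
  have hrsg : r * (sᴴ * g) = sᴴ * g := by rw [← Matrix.mul_assoc, h.mul_conjTranspose_right]
  have hsgr : sᴴ * g * r = sᴴ * g := by rw [Matrix.mul_assoc, hgr]
  obtain ⟨w, hrw, hmul, hmul'⟩ :=
    exists_corner_inverse_of_isQuasiregular h.isProjM_right.2 hrsg hsgr hreg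
  have hretract : IsRetract P r (s * (sᴴ * g)) (w * sᴴ) := by
    refine ⟨?_, ?_, ?_, ?_⟩
    · rw [← Matrix.mul_assoc, h.mul_right]
    · rw [Matrix.mul_assoc, h.conjTranspose_right_mul]
    · rw [← Matrix.mul_assoc, hrw]
    · rw [Matrix.mul_assoc, ← Matrix.mul_assoc sᴴ, h.right_isometry, hrsg, hmul']
  have hrange : s * (sᴴ * g) * (w * sᴴ) = s * sᴴ := by
    rw [Matrix.mul_assoc, ← Matrix.mul_assoc (sᴴ * g), hmul, h.mul_conjTranspose_right]
  rw [← hrange]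
  exact hj.algebraicallyEquivalent_sub_of_common_section h.isIdempotentElem hretract hPg hσg
    (by rw [Matrix.mul_assoc, hmul'])

variable {t' : Matrix m b A} {s' : Matrix m k A} {n : ℕ}

theorem exists_left_invertible_isQuasiregular (h : IsOrthogonalSplitting P p r t s)
    (h' : IsOrthogonalSplitting P q r t' s') (htsr : CornerTsrLe r n)
    (hsub : SubEquiv (nFold n r) p) :
    ∃ (y : Matrix a k A) (z : Matrix k a A), p * y = y ∧ y * r = y ∧ z * y = r ∧
      IsQuasiregular (s'ᴴ * (t * y + s * (sᴴ * s')) - r) := by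
  have hclosure := htsr.mem_closure_left_invertible h.isProjM_left.1 h.isProjM_right.2 hsub
    (x := tᴴ * s') (by rw [← Matrix.mul_assoc, h.swap.mul_conjTranspose_right])
    (by rw [Matrix.mul_assoc, h'.right_mul])
  have hzero : s'ᴴ * (t * (tᴴ * s') + s * (sᴴ * s')) - r = 0 := by
    rw [← Matrix.mul_assoc, ← Matrix.mul_assoc, ← Matrix.add_mul, h.add_eq, h'.mul_right,
      h'.right_isometry, sub_self]
  have hcont : Continuous fun y => s'ᴴ * (t * y + s * (sᴴ * s')) - r := by fun_prop
  have hreg := (hcont.tendsto' _ _ hzero).eventually eventually_isQuasiregular_nhds_zero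
  obtain ⟨y, ⟨hpy, hyr, z, hzy⟩, hy⟩ :=
    ((mem_closure_iff_frequently.1 hclosure).and_eventually hreg).exists
  exact ⟨y, z, hpy, hyr, hzy, hy⟩

theorem algebraicallyEquivalent_mul_conjTranspose (h : IsOrthogonalSplitting P p r t s)
    (h' : IsOrthogonalSplitting P q r t' s') (htsr : CornerTsrLe r n)
    (hsub : SubEquiv (nFold n r) p) : AlgebraicallyEquivalent (t * tᴴ) (t' * t'ᴴ) := by
  obtain ⟨y, z, hpy, hyr, hzy, hreg⟩ := h.exists_left_invertible_isQuasiregular h' htsr hsub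
  have hretract := h.isRetract_of_left_inverse hpy hzy
  have hzs : r * z * tᴴ * s = 0 := by rw [Matrix.mul_assoc, h.orthogonal, Matrix.mul_zero]
  have hsy : sᴴ * (t * y) = 0 := by rw [← Matrix.mul_assoc, h.swap.orthogonal, Matrix.zero_mul]
  have hfirst := h.algebraicallyEquivalent_sub_of_orthogonal hretract hsy hzs
  have hsecond := h'.algebraicallyEquivalent_sub_of_isQuasiregular hretract
    (g := t * y + s * (sᴴ * s'))
    (by rw [Matrix.mul_add, hretract.mul_inclusion, ← Matrix.mul_assoc, h.mul_right])
    (by simp only [Matrix.add_mul, Matrix.mul_assoc, hyr, h'.right_mul])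
    (by rw [Matrix.mul_add, hretract.retraction_mul_inclusion, ← Matrix.mul_assoc, hzs,
      Matrix.zero_mul, add_zero])
    hreg
  rw [← h.sub_right, ← h'.sub_right]
  refine hfirst.trans ?_ ?_ hsecond
  · rw [h.sub_right]
    exact h.isProjM_mul_conjTranspose_left.2
  · rw [h'.sub_right]
    exact h'.isProjM_mul_conjTranspose_left.2

end IsOrthogonalSplitting

end OrthogonalSplitting

/-- Warfield–Rieffel cancellation: if `p ⊕ r ∼ q ⊕ r`, the corner `r M_k (A) r` has
topological stable rank at most `n`, and `n * r ≾ p`, then `p ∼ q`. -/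
theorem mvNEquiv_of_dSum_mvNEquiv {A : Type*} [NonUnitalCStarAlgebra A]
    {a b k : ℕ} (n : ℕ)
    (p : Matrix (Fin a) (Fin a) A) (q : Matrix (Fin b) (Fin b) A)
    (r : Matrix (Fin k) (Fin k) A)
    (hp : IsProjM p) (hq : IsProjM q) (hr : IsProjM r)
    (hsum : MvNEquiv (dSum p r) (dSum q r))
    (htsr : CornerTsrLe r n)
    (hsub : SubEquiv (nFold n r) p) :
    MvNEquiv p q := by
  obtain ⟨t, s, hts⟩ := (hp.dSum hr).mvNEquiv_refl.exists_isOrthogonalSplitting hp hr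
  obtain ⟨t', s', hts'⟩ := hsum.exists_isOrthogonalSplitting hq hr
  have hpt : MvNEquiv p (t * tᴴ) := MvNEquiv.symm ⟨t, rfl, hts.left_isometry⟩
  have htq : MvNEquiv (t' * t'ᴴ) q := ⟨t', rfl, hts'.left_isometry⟩
  have hproj := hts.isProjM_mul_conjTranspose_left
  have hproj' := hts'.isProjM_mul_conjTranspose_left
  have htt' : MvNEquiv (t * tᴴ) (t' * t'ᴴ) := .of_algebraicallyEquivalent hproj hproj'
    (hts.algebraicallyEquivalent_mul_conjTranspose hts' htsr hsub)
  exact (hpt.trans hp.2 hproj'.2 htt').trans hp.2 hq.2 htq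
end
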